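/- arXiv:2406.10575 — 9 statements merged into one kernel-verified Lean document; each statement's English description precedes it below -/
import Mathlib

section
/- Let K be a field and let A be a (not necessarily unital) commutative associative K-algebra with dim_K A = 2. If the multiplication map is surjective, i.e. the K-linear map A ⊗_K A → A induced by multiplication is surjective, then A has a multiplicative identity element. -/
/-- A commutative non-unital algebra that is finitely generated as a module and whose multiplication
is surjective on the tensor square is unital: apply Nakayama's lemma to the augmentation ideal of
its unitization. -/
theorem exists_forall_mul_eq_self_of_surjective_lift_mul {R A : Type*} [CommRing R]
    [NonUnitalCommRing A] [Module R A] [IsScalarTower R A A] [SMulCommClass R A A]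
    [Module.Finite R A]
    (h : Function.Surjective (TensorProduct.lift (LinearMap.mul R A))) :
    ∃ u : A, ∀ x : A, u * x = x := by
  let I : Ideal (Unitization R A) := RingHom.ker (Unitization.fstHom R A)
  have mem_I (x : Unitization R A) : x ∈ I ↔ x.fst = 0 := Iff.rfl
  have inr_mem (a : A) : (a : Unitization R A) ∈ I := (mem_I _).2 (Unitization.fst_inr R a)
  have eq_inr {x : Unitization R A} (hx : x ∈ I) : x = (x.snd : Unitization R A) :=
    Unitization.ext ((mem_I x).1 hx) rfl
  have hfg : I.FG := by
    refine Submodule.FG.of_restrictScalars R ?_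
    have hI : I.restrictScalars R = LinearMap.range (Unitization.inrHom R R A) := by
      ext x
      exact ⟨fun hx => ⟨x.snd, (eq_inr hx).symm⟩, by rintro ⟨a, rfl⟩; exact inr_mem a⟩
    rw [hI, LinearMap.range_eq_map]
    exact Module.Finite.fg_top.map _
  have hsq : I ≤ I • I := by
    intro x hx
    obtain ⟨t, ht⟩ := h x.snd
    rw [eq_inr hx, ← ht]
    clear ht
    induction t with
    | zero => simp
    | tmul a b =>
      simpa using Ideal.mul_mem_mul (inr_mem a) (inr_mem b)
    | add s t hs ht =>
      rw [map_add, Unitization.inr_add]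
      exact add_mem hs ht
  obtain ⟨r, hr, hr0⟩ := Submodule.exists_sub_one_mem_and_smul_eq_zero_of_fg_of_le_smul I I hfg hsq
  refine ⟨-(r - 1).snd, fun x => ?_⟩
  have hx : r * (x : Unitization R A) = 0 := hr0 _ (inr_mem x)
  have hx' : ((r - 1).snd : Unitization R A) * x = -x := by
    rw [← eq_inr hr, sub_mul, hx, one_mul, zero_sub]
  rw [← Unitization.inr_mul, ← Unitization.inr_neg] at hx'
  rw [neg_mul, Unitization.inr_injective hx', neg_neg]

/-- Any 2-dimensional commutative associative (not necessarily unital) algebra over a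
field with surjective multiplication is unital. -/
theorem stmt_2 (K : Type*) [Field K]
    (A : Type*) [AddCommGroup A] [Module K A]
    [FiniteDimensional K A] (hdim : Module.finrank K A = 2)
    (m : A →ₗ[K] A →ₗ[K] A)
    (hcomm : ∀ x y : A, m x y = m y x)
    (hassoc : ∀ x y z : A, m (m x y) z = m x (m y z))
    (hsurj : Function.Surjective (TensorProduct.lift m)) :
    ∃ u : A, ∀ x : A, m u x = x := by
  let : NonUnitalCommRing A :=
    { ‹AddCommGroup A› with
      mul := fun x y => m x y
      left_distrib := fun x y z => map_add (m x) y z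
      right_distrib := fun x y z => LinearMap.map_add₂ m x y z
      zero_mul := LinearMap.map_zero₂ m
      mul_zero := fun x => map_zero (m x)
      mul_assoc := hassoc
      mul_comm := hcomm }
  have : IsScalarTower K A A := ⟨fun c x y => LinearMap.map_smul₂ m c x y⟩
  have : SMulCommClass K A A := ⟨fun c x y => ((m x).map_smul c y).symm⟩
  exact exists_forall_mul_eq_self_of_surjective_lift_mul (R := K) (A := A) hsurj
end

section
/- Let R be a commutative ring and let A be an R-module generated by two elements e₁, e₂, equipped with a commutative R-bilinear multiplication m : A × A → A. Then m is associative (i.e. m(m(x,y),z) = m(x,m(y,z)) for all x,y,z ∈ A) if and only if m(m(e₁,e₁),e₂) = m(e₁,m(e₁,e₂)) and m(m(e₂,e₂),e₁) = m(e₂,m(e₂,e₁)). -/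
/-- A bilinear multiplication is associative as soon as it is so on a spanning set. -/
theorem LinearMap.assoc_of_span_eq_top {R A : Type*} [CommRing R] [AddCommGroup A] [Module R A]
    {s : Set A} (hs : Submodule.span R s = ⊤) (m : A →ₗ[R] A →ₗ[R] A)
    (h : ∀ x ∈ s, ∀ y ∈ s, ∀ z ∈ s, m (m x y) z = m x (m y z)) (x y z : A) :
    m (m x y) z = m x (m y z) := by
  have mem (a : A) : a ∈ Submodule.span R s := hs ▸ Submodule.mem_top
  induction mem x using Submodule.span_induction with
  | zero => simp
  | add a b _ _ ha hb => simp [ha, hb]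
  | smul r a _ ha => simp [ha]
  | mem x hx =>
  induction mem y using Submodule.span_induction with
  | zero => simp
  | add a b _ _ ha hb => simp [ha, hb]
  | smul r a _ ha => simp [ha]
  | mem y hy =>
  induction mem z using Submodule.span_induction with
  | zero => simp
  | add a b _ _ ha hb => simp [ha, hb]
  | smul r a _ ha => simp [ha]
  | mem z hz => exact h x hx y hy z hz

/-- For a commutative bilinear multiplication on a module generated by two elements,
associativity reduces to two identities on the generators. -/
theorem stmt_3 (R : Type*) [CommRing R]
    (A : Type*) [AddCommGroup A] [Module R A]
    (e₁ e₂ : A) (hgen : Submodule.span R ({e₁, e₂} : Set A) = ⊤)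
    (m : A →ₗ[R] A →ₗ[R] A)
    (hcomm : ∀ x y : A, m x y = m y x) :
    (∀ x y z : A, m (m x y) z = m x (m y z)) ↔
      (m (m e₁ e₁) e₂ = m e₁ (m e₁ e₂) ∧ m (m e₂ e₂) e₁ = m e₂ (m e₂ e₁)) := by
  refine ⟨fun h => ⟨h _ _ _, h _ _ _⟩, fun ⟨h₁, h₂⟩ => m.assoc_of_span_eq_top hgen ?_⟩
  rintro x (rfl | rfl) y (rfl | rfl) z (rfl | rfl) <;> grind
end

section
/- Let K be a field and let A be a K-vector space with dim_K A ≤ 2, equipped with a commutative K-bilinear multiplication m : A × A → A. If A contains a multiplicative identity element (an element 1 with m(1,x) = x for all x ∈ A), then m is associative: m(m(x,y),z) = m(x,m(y,z)) for all x,y,z ∈ A. -/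
/-- In a vector space of dimension at most 2, every nonzero vector `u` can be complemented by a
vector `t` such that `u` and `t` span the space. -/
theorem exists_forall_eq_smul_add_smul_of_finrank_le_two {K A : Type*} [Field K] [AddCommGroup A]
    [Module K A] [FiniteDimensional K A] (hdim : Module.finrank K A ≤ 2) {u : A} (hu : u ≠ 0) :
    ∃ t : A, ∀ x : A, ∃ a b : K, x = a • u + b • t := by
  have hquot : Module.finrank K (A ⧸ Submodule.span K {u}) ≤ 1 := by
    have hadd := Submodule.finrank_quotient_add_finrank (Submodule.span K {u})
    rw [finrank_span_singleton hu] at hadd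
    omega
  obtain ⟨v, hv⟩ := finrank_le_one_iff.mp hquot
  obtain ⟨t, rfl⟩ := Submodule.Quotient.mk_surjective _ v
  refine ⟨t, fun x => ?_⟩
  obtain ⟨b, hb⟩ := hv (Submodule.Quotient.mk x)
  rw [← Submodule.Quotient.mk_smul, eq_comm, Submodule.Quotient.eq,
    Submodule.mem_span_singleton] at hb
  obtain ⟨a, ha⟩ := hb
  exact ⟨a, b, by rw [ha, sub_add_cancel]⟩

/-- A commutative bilinear multiplication on a vector space of dimension at most 2
that admits an identity element is associative. -/
theorem stmt_4 (K : Type*) [Field K]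
    (A : Type*) [AddCommGroup A] [Module K A]
    [FiniteDimensional K A] (hdim : Module.finrank K A ≤ 2)
    (m : A →ₗ[K] A →ₗ[K] A)
    (hcomm : ∀ x y : A, m x y = m y x)
    (one : A) (hone : ∀ x : A, m one x = x) :
    ∀ x y z : A, m (m x y) z = m x (m y z) := by
  intro x y z
  by_cases h0 : one = 0
  · have hzero : ∀ w : A, w = 0 := fun w => by rw [← hone w, h0, map_zero, LinearMap.zero_apply]
    rw [hzero (m (m x y) z), hzero (m x (m y z))]
  obtain ⟨t, ht⟩ := exists_forall_eq_smul_add_smul_of_finrank_le_two hdim h0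
  have hone' : ∀ w : A, m w one = w := fun w => by rw [hcomm, hone]
  obtain ⟨a, b, rfl⟩ := ht x
  obtain ⟨c, d, rfl⟩ := ht y
  obtain ⟨e, f, rfl⟩ := ht z
  simp only [map_add, map_smul, LinearMap.add_apply, LinearMap.smul_apply, hone, hone',
    hcomm (m t t) t]
end

section
/- Let K be a field of characteristic ≠ 2 and let α₂, β₂ ∈ K. Let A be the K-algebra on K² with basis e₁, e₂ whose multiplication is the commutative K-bilinear map m with m(e₁,e₁) = e₁, m(e₁,e₂) = α₂e₁ + β₂e₂, m(e₂,e₂) = e₂. Then m is associative if and only if (α₂,β₂) ∈ {(0,0), (0,1), (1,0)}; moreover in each of these three cases A is unital, with identity element e₁ + e₂, e₁, and e₂ respectively. -/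
/-- Coordinate formula for a commutative bilinear multiplication on `K²` whose two basis vectors
are idempotent. -/
theorem bilin_apply_of_basis_idempotent {K : Type*} [Field K] {α₂ β₂ : K}
    {m : (Fin 2 → K) →ₗ[K] (Fin 2 → K) →ₗ[K] (Fin 2 → K)}
    (hcomm : ∀ x y, m x y = m y x)
    (h11 : m ![1, 0] ![1, 0] = ![1, 0])
    (h12 : m ![1, 0] ![0, 1] = α₂ • ![1, 0] + β₂ • ![0, 1])
    (h22 : m ![0, 1] ![0, 1] = ![0, 1]) (x y : Fin 2 → K) :
    m x y = ![x 0 * y 0 + α₂ * (x 0 * y 1 + x 1 * y 0),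
      x 1 * y 1 + β₂ * (x 0 * y 1 + x 1 * y 0)] := by
  have decomp (v : Fin 2 → K) : v = v 0 • ![1, 0] + v 1 • ![0, 1] := by
    ext i; fin_cases i <;> simp
  have h21 := (hcomm ![0, 1] ![1, 0]).trans h12
  conv_lhs => rw [decomp x, decomp y]
  simp only [map_add, map_smul, LinearMap.add_apply, LinearMap.smul_apply, h11, h12, h21, h22]
  ext i
  fin_cases i <;> simp <;> ring

/-- The algebra `m⁶`: associativity holds iff `(α₂,β₂) ∈ {(0,0),(0,1),(1,0)}`, and in
these cases the identity element is `e₁+e₂`, `e₁`, `e₂` respectively. -/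
theorem stmt_5 (K : Type*) [Field K] (hchar : (2 : K) ≠ 0) (α₂ β₂ : K)
    (m : (Fin 2 → K) →ₗ[K] (Fin 2 → K) →ₗ[K] (Fin 2 → K))
    (hcomm : ∀ x y, m x y = m y x)
    (h11 : m ![1, 0] ![1, 0] = ![1, 0])
    (h12 : m ![1, 0] ![0, 1] = α₂ • ![1, 0] + β₂ • ![0, 1])
    (h22 : m ![0, 1] ![0, 1] = ![0, 1]) :
    ((∀ x y z, m (m x y) z = m x (m y z)) ↔
      ((α₂, β₂) = (0, 0) ∨ (α₂, β₂) = (0, 1) ∨ (α₂, β₂) = (1, 0))) ∧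
    ((α₂, β₂) = (0, 0) → ∀ x, m (![1, 0] + ![0, 1]) x = x) ∧
    ((α₂, β₂) = (0, 1) → ∀ x, m ![1, 0] x = x) ∧
    ((α₂, β₂) = (1, 0) → ∀ x, m ![0, 1] x = x) := by
  have hm := bilin_apply_of_basis_idempotent hcomm h11 h12 h22
  simp only [Prod.mk.injEq]
  refine ⟨⟨fun h => ?_, ?_⟩, ?_, ?_, ?_⟩
  · have left := h ![1, 0] ![1, 0] ![0, 1]
    have right := h ![1, 0] ![0, 1] ![0, 1]
    have hαβ := congrFun left 0
    have hβ := congrFun left 1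
    have hα := congrFun right 0
    simp [hm] at hαβ hβ hα
    grind
  · rintro (⟨rfl, rfl⟩ | ⟨rfl, rfl⟩ | ⟨rfl, rfl⟩) x y z <;> ext i <;> fin_cases i <;>
      simp [hm] <;> ring
  all_goals
    rintro ⟨rfl, rfl⟩ x
    ext i
    fin_cases i <;> simp [hm]
end

section
/- Let K be a field of characteristic ≠ 2 and let β₂ ∈ K. Let A be the K-algebra on K² with basis e₁, e₂ whose multiplication is the commutative K-bilinear map m with m(e₁,e₁) = e₁, m(e₁,e₂) = β₂e₂, m(e₂,e₂) = 0. Then m is associative if and only if β₂ = 0 or β₂ = 1, and A is unital if and only if β₂ = 1, in which case e₁ is the identity element. -/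
/-- A commutative bilinear product with `e₁e₁ = e₁`, `e₁e₂ = b e₂`, `e₂e₂ = 0`, in coordinates. -/
lemma mul_apply_eq_vec {K : Type*} [Field K] {b : K}
    {m : (Fin 2 → K) →ₗ[K] (Fin 2 → K) →ₗ[K] (Fin 2 → K)}
    (hcomm : ∀ x y, m x y = m y x)
    (h11 : m ![1, 0] ![1, 0] = ![1, 0])
    (h12 : m ![1, 0] ![0, 1] = b • ![0, 1])
    (h22 : m ![0, 1] ![0, 1] = 0) (x y : Fin 2 → K) :
    m x y = ![x 0 * y 0, b * (x 0 * y 1 + x 1 * y 0)] := by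
  have decomp (v : Fin 2 → K) : v = v 0 • ![1, 0] + v 1 • ![0, 1] := by
    ext i; fin_cases i <;> simp
  have h21 : m ![0, 1] ![1, 0] = b • ![0, 1] := (hcomm _ _).trans h12
  conv_lhs => rw [decomp x, decomp y]
  simp only [map_add, map_smul, LinearMap.add_apply, LinearMap.smul_apply, h11, h12, h21, h22]
  ext i
  fin_cases i
  · simp [mul_comm]
  · simp
    ring

/-- The algebra `m⁹`: associativity holds iff `β₂ = 0` or `β₂ = 1`; it is unital iff
`β₂ = 1`, in which case `e₁` is the identity element. -/
theorem stmt_6 (K : Type*) [Field K] (hchar : (2 : K) ≠ 0) (β₂ : K)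
    (m : (Fin 2 → K) →ₗ[K] (Fin 2 → K) →ₗ[K] (Fin 2 → K))
    (hcomm : ∀ x y, m x y = m y x)
    (h11 : m ![1, 0] ![1, 0] = ![1, 0])
    (h12 : m ![1, 0] ![0, 1] = β₂ • ![0, 1])
    (h22 : m ![0, 1] ![0, 1] = 0) :
    ((∀ x y z, m (m x y) z = m x (m y z)) ↔ (β₂ = 0 ∨ β₂ = 1)) ∧
    ((∃ u, ∀ x, m u x = x) ↔ β₂ = 1) ∧
    (β₂ = 1 → ∀ x, m ![1, 0] x = x) := by
  have hm := mul_apply_eq_vec hcomm h11 h12 h22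
  have hone : β₂ = 1 → ∀ x, m ![1, 0] x = x := by
    rintro rfl x
    ext i; fin_cases i <;> simp [hm]
  refine ⟨⟨fun h => ?_, fun h x y z => ?_⟩, ⟨?_, fun h => ⟨_, hone h⟩⟩, hone⟩
  · have h1 := congrFun (h ![1, 0] ![1, 0] ![0, 1]) 1
    simp only [hm] at h1
    have hidem : β₂ = β₂ * β₂ := by simpa using h1
    exact IsIdempotentElem.iff_eq_zero_or_one.mp hidem.symm
  · simp only [hm]
    rcases h with rfl | rfl <;> ext i <;> fin_cases i <;> simp <;> ring
  · rintro ⟨u, hu⟩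
    have h0 : u 0 = 1 := by simpa [hm] using congrFun (hu ![1, 0]) 0
    simpa [hm, h0] using congrFun (hu ![0, 1]) 1
end

section
/- Let K be a field of characteristic ≠ 2 and let α₄ ∈ K. Let A be the K-algebra on K² with basis e₁, e₂ whose multiplication is the commutative K-bilinear map m with m(e₁,e₁) = e₁, m(e₁,e₂) = e₁, m(e₂,e₂) = α₄e₁. Then m is associative if and only if α₄ = 1, and A is not unital for any value of α₄. -/
/-- The algebra `m¹⁰`: associativity holds iff `α₄ = 1`, and it is never unital. -/
theorem stmt_7 (K : Type*) [Field K] (hchar : (2 : K) ≠ 0) (α₄ : K)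
    (m : (Fin 2 → K) →ₗ[K] (Fin 2 → K) →ₗ[K] (Fin 2 → K))
    (hcomm : ∀ x y, m x y = m y x)
    (h11 : m ![1, 0] ![1, 0] = ![1, 0])
    (h12 : m ![1, 0] ![0, 1] = ![1, 0])
    (h22 : m ![0, 1] ![0, 1] = α₄ • ![1, 0]) :
    ((∀ x y z, m (m x y) z = m x (m y z)) ↔ α₄ = 1) ∧
    ¬ ∃ u, ∀ x, m u x = x := by
  have h21 : m ![0, 1] ![1, 0] = ![1, 0] := by rw [hcomm, h12]
  have basis_expansion (x : Fin 2 → K) : x = x 0 • ![1, 0] + x 1 • ![0, 1] := by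
    ext i; fin_cases i <;> simp
  have mul_eq (x y : Fin 2 → K) :
      m x y = ![x 0 * y 0 + x 0 * y 1 + x 1 * y 0 + α₄ * (x 1 * y 1), 0] := by
    conv_lhs => rw [basis_expansion x, basis_expansion y]
    simp only [map_add, map_smul, LinearMap.add_apply, LinearMap.smul_apply, h11, h12, h21, h22]
    ext i; fin_cases i
    · simp; ring
    · simp
  refine ⟨⟨fun h => ?_, ?_⟩, ?_⟩
  · have h122 := congrFun (h ![1, 0] ![0, 1] ![0, 1]) 0
    simpa [mul_eq] using h122.symm
  · rintro rfl x y z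
    ext i; fin_cases i
    · simp [mul_eq]; ring
    · simp [mul_eq]
  · rintro ⟨u, hu⟩
    have h2 := congrFun (hu ![0, 1]) 1
    simp [mul_eq] at h2
end

section
/- Let K be a field of characteristic ≠ 2. None of the following five K-algebras on K² with basis e₁, e₂ is associative (and in particular none is unital): (m⁷) m(e₁,e₁) = e₁, m(e₁,e₂) = e₁ + (1/2)e₂, m(e₂,e₂) = 0; (m⁸) m(e₁,e₁) = e₁, m(e₁,e₂) = (1/2)e₂, m(e₂,e₂) = e₁; (m¹¹) m(e₁,e₁) = e₁, m(e₁,e₂) = 0, m(e₂,e₂) = e₁; (m¹⁵) m(e₁,e₁) = e₂, m(e₁,e₂) = −2e₁ + 3e₂, m(e₂,e₂) = −8e₁ + 8e₂; (m¹⁶) m(e₁,e₁) = 0, m(e₁,e₂) = e₁, m(e₂,e₂) = 0. -/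
/-- The coordinates of a unit of a commutative algebra on `K²`, in terms of the products of the
standard basis vectors. -/
theorem exists_unit_coords {K : Type*} [CommSemiring K]
    {m : (Fin 2 → K) →ₗ[K] (Fin 2 → K) →ₗ[K] (Fin 2 → K)} (hcomm : ∀ x y, m x y = m y x)
    (hu : ∃ u, ∀ x, m u x = x) :
    ∃ a b : K, a • m ![1, 0] ![1, 0] + b • m ![1, 0] ![0, 1] = ![1, 0] ∧
      a • m ![1, 0] ![0, 1] + b • m ![0, 1] ![0, 1] = ![0, 1] := by
  obtain ⟨u, hu⟩ := hu
  have hdecomp : u = u 0 • ![1, 0] + u 1 • ![0, 1] := by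
    ext i; fin_cases i <;> simp
  have hmul (x : Fin 2 → K) : u 0 • m ![1, 0] x + u 1 • m ![0, 1] x = x := by
    rw [← LinearMap.map_smul₂, ← LinearMap.map_smul₂, ← LinearMap.map_add₂, ← hdecomp, hu]
  refine ⟨u 0, u 1, ?_, hmul _⟩
  rw [hcomm ![1, 0] ![0, 1]]
  exact hmul _

/-- The algebras `m⁷`, `m⁸`, `m¹¹`, `m¹⁵`, `m¹⁶` are neither associative nor unital. -/
theorem stmt_9 (K : Type*) [Field K] (hchar : (2 : K) ≠ 0)
    (m₇ m₈ m₁₁ m₁₅ m₁₆ : (Fin 2 → K) →ₗ[K] (Fin 2 → K) →ₗ[K] (Fin 2 → K))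
    (hcomm₇ : ∀ x y, m₇ x y = m₇ y x)
    (h7a : m₇ ![1, 0] ![1, 0] = ![1, 0])
    (h7b : m₇ ![1, 0] ![0, 1] = ![1, 0] + (2 : K)⁻¹ • ![0, 1])
    (h7c : m₇ ![0, 1] ![0, 1] = 0)
    (hcomm₈ : ∀ x y, m₈ x y = m₈ y x)
    (h8a : m₈ ![1, 0] ![1, 0] = ![1, 0])
    (h8b : m₈ ![1, 0] ![0, 1] = (2 : K)⁻¹ • ![0, 1])
    (h8c : m₈ ![0, 1] ![0, 1] = ![1, 0])
    (hcomm₁₁ : ∀ x y, m₁₁ x y = m₁₁ y x)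
    (h11a : m₁₁ ![1, 0] ![1, 0] = ![1, 0])
    (h11b : m₁₁ ![1, 0] ![0, 1] = 0)
    (h11c : m₁₁ ![0, 1] ![0, 1] = ![1, 0])
    (hcomm₁₅ : ∀ x y, m₁₅ x y = m₁₅ y x)
    (h15a : m₁₅ ![1, 0] ![1, 0] = ![0, 1])
    (h15b : m₁₅ ![1, 0] ![0, 1] = (-2 : K) • ![1, 0] + (3 : K) • ![0, 1])
    (h15c : m₁₅ ![0, 1] ![0, 1] = (-8 : K) • ![1, 0] + (8 : K) • ![0, 1])
    (hcomm₁₆ : ∀ x y, m₁₆ x y = m₁₆ y x)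
    (h16a : m₁₆ ![1, 0] ![1, 0] = 0)
    (h16b : m₁₆ ![1, 0] ![0, 1] = ![1, 0])
    (h16c : m₁₆ ![0, 1] ![0, 1] = 0) :
    (¬ (∀ x y z, m₇ (m₇ x y) z = m₇ x (m₇ y z)) ∧ ¬ ∃ u, ∀ x, m₇ u x = x) ∧
    (¬ (∀ x y z, m₈ (m₈ x y) z = m₈ x (m₈ y z)) ∧ ¬ ∃ u, ∀ x, m₈ u x = x) ∧
    (¬ (∀ x y z, m₁₁ (m₁₁ x y) z = m₁₁ x (m₁₁ y z)) ∧ ¬ ∃ u, ∀ x, m₁₁ u x = x) ∧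
    (¬ (∀ x y z, m₁₅ (m₁₅ x y) z = m₁₅ x (m₁₅ y z)) ∧ ¬ ∃ u, ∀ x, m₁₅ u x = x) ∧
    (¬ (∀ x y z, m₁₆ (m₁₆ x y) z = m₁₆ x (m₁₆ y z)) ∧ ¬ ∃ u, ∀ x, m₁₆ u x = x) := by
  refine ⟨⟨fun h => ?_, fun hu => ?_⟩, ⟨fun h => ?_, fun hu => ?_⟩, ⟨fun h => ?_, fun hu => ?_⟩,
    ⟨fun h => ?_, fun hu => ?_⟩, ⟨fun h => ?_, fun hu => ?_⟩⟩
  · have h := congrFun (h ![1, 0] ![0, 1] ![0, 1]) 0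
    simp only [h7b, h7c, map_add, map_smul, map_zero, LinearMap.add_apply,
      LinearMap.smul_apply] at h
    simp at h
  · obtain ⟨a, b, h₁, h₂⟩ := exists_unit_coords hcomm₇ hu
    simp [h7a, h7b, h7c] at h₁ h₂
    grind
  · have h := congrFun (h ![1, 0] ![1, 0] ![0, 1]) 1
    simp only [h8a, h8b, map_smul] at h
    simp at h
    grind
  · obtain ⟨a, b, h₁, h₂⟩ := exists_unit_coords hcomm₈ hu
    simp [h8a, h8b, h8c] at h₁ h₂
    grind
  · have h := congrFun (h ![1, 0] ![0, 1] ![0, 1]) 0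
    simp only [h11a, h11b, h11c, map_zero, LinearMap.zero_apply] at h
    simp at h
  · obtain ⟨a, b, h₁, h₂⟩ := exists_unit_coords hcomm₁₁ hu
    simp [h11a, h11b, h11c] at h₁ h₂
  · have h := congrFun (h ![1, 0] ![1, 0] ![0, 1]) 0
    simp only [h15a, h15b, h15c, map_add, map_smul] at h
    simp at h
    grind
  · obtain ⟨a, b, h₁, h₂⟩ := exists_unit_coords hcomm₁₅ hu
    simp [h15a, h15b, h15c] at h₁ h₂
    grind
  · have h := congrFun (h ![1, 0] ![0, 1] ![0, 1]) 0
    simp only [h16b, h16c, map_zero] at h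
    simp at h
  · obtain ⟨a, b, h₁, h₂⟩ := exists_unit_coords hcomm₁₆ hu
    simp [h16a, h16b, h16c] at h₁ h₂
end

section
/- Let K be a field of characteristic ≠ 2 and let α₂, β₂, α₄, β₄ ∈ K. Let A be the K-algebra on K² with basis e₁, e₂ whose multiplication is the commutative K-bilinear map m with m(e₁,e₁) = e₂, m(e₁,e₂) = α₂e₁ + β₂e₂, m(e₂,e₂) = α₄e₁ + β₄e₂. Then m is associative if and only if α₄ = α₂β₂ and β₄ = α₂ + β₂². -/
/-- The algebra `m¹⁵'¹_R`: associativity holds iff `α₄ = α₂β₂` and `β₄ = α₂ + β₂²`. -/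
theorem stmt_12 (K : Type*) [Field K] (hchar : (2 : K) ≠ 0) (α₂ β₂ α₄ β₄ : K)
    (m : (Fin 2 → K) →ₗ[K] (Fin 2 → K) →ₗ[K] (Fin 2 → K))
    (hcomm : ∀ x y, m x y = m y x)
    (h11 : m ![1, 0] ![1, 0] = ![0, 1])
    (h12 : m ![1, 0] ![0, 1] = α₂ • ![1, 0] + β₂ • ![0, 1])
    (h22 : m ![0, 1] ![0, 1] = α₄ • ![1, 0] + β₄ • ![0, 1]) :
    (∀ x y z, m (m x y) z = m x (m y z)) ↔ (α₄ = α₂ * β₂ ∧ β₄ = α₂ + β₂ ^ 2) := by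
  have h21 : m ![0, 1] ![1, 0] = α₂ • ![1, 0] + β₂ • ![0, 1] := by rw [hcomm, h12]
  constructor
  · intro h
    have key := h ![1, 0] ![1, 0] ![0, 1]
    rw [h11, h12, h22, map_add, map_smul, map_smul, h11, h12] at key
    have key₀ := congrFun key 0
    have key₁ := congrFun key 1
    simp at key₀ key₁
    exact ⟨by linear_combination key₀, by linear_combination key₁⟩
  · rintro ⟨rfl, rfl⟩ x y z
    have decomp : ∀ v : Fin 2 → K, v = v 0 • ![1, 0] + v 1 • ![0, 1] := by
      intro v
      ext i
      fin_cases i <;> simp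
    have mul_eq : ∀ v w : Fin 2 → K, m v w =
        ![α₂ * (v 0 * w 1 + v 1 * w 0) + α₂ * β₂ * (v 1 * w 1),
          v 0 * w 0 + β₂ * (v 0 * w 1 + v 1 * w 0) + (α₂ + β₂ ^ 2) * (v 1 * w 1)] := by
      intro v w
      conv_lhs => rw [decomp v, decomp w]
      simp only [map_add, map_smul, LinearMap.add_apply, LinearMap.smul_apply, h11, h12, h21, h22]
      ext i
      fin_cases i <;> simp <;> ring
    ext i
    fin_cases i <;> simp [mul_eq] <;> ring
end

section
/- Let K be a field and let α₂, β₂ ∈ K. Let A be the K-algebra on K² with basis e₁, e₂ whose multiplication is the commutative K-bilinear map m with m(e₁,e₁) = e₂, m(e₁,e₂) = α₂e₁ + β₂e₂, m(e₂,e₂) = α₂β₂e₁ + (α₂ + β₂²)e₂. If the polynomial P_R(y) = −1 + (5α₂ + β₂²)y + (−8α₂² − 2α₂β₂²)y² + (4α₂³ + α₂²β₂²)y³ has no root in K, then the multiplication of A is not surjective, i.e. the induced K-linear map A ⊗_K A → A is not surjective. (Indeed, if α₂ = 0 then all products lie in the span of e₂, while if α₂ ≠ 0 then α₂⁻¹ is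 a root of P_R.) -/
/-- If the polynomial `P_R` attached to the exceptional algebra `A_R` has no root in
`K`, then the multiplication of `A_R` is not surjective. -/
theorem stmt_17 (K : Type*) [Field K] (α₂ β₂ : K)
    (m : (Fin 2 → K) →ₗ[K] (Fin 2 → K) →ₗ[K] (Fin 2 → K))
    (hcomm : ∀ x y, m x y = m y x)
    (h11 : m ![1, 0] ![1, 0] = ![0, 1])
    (h12 : m ![1, 0] ![0, 1] = α₂ • ![1, 0] + β₂ • ![0, 1])
    (h22 : m ![0, 1] ![0, 1] = (α₂ * β₂) • ![1, 0] + (α₂ + β₂ ^ 2) • ![0, 1])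
    (hroot : ∀ y : K, -1 + (5 * α₂ + β₂ ^ 2) * y + (-8 * α₂ ^ 2 - 2 * α₂ * β₂ ^ 2) * y ^ 2 +
      (4 * α₂ ^ 3 + α₂ ^ 2 * β₂ ^ 2) * y ^ 3 ≠ 0) :
    ¬ Function.Surjective (TensorProduct.lift m) := by
  have hα : α₂ = 0 := by
    by_contra hα
    refine hroot α₂⁻¹ ?_
    field_simp
    ring
  subst hα
  have h21 : m ![0, 1] ![1, 0] = (0 : K) • ![1, 0] + β₂ • ![0, 1] := by rw [hcomm, h12]
  have hdecomp (x : Fin 2 → K) : x = x 0 • ![1, 0] + x 1 • ![0, 1] := by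
    ext i; fin_cases i <;> simp
  have hm (x y : Fin 2 → K) : m x y 0 = 0 := by
    rw [hdecomp x, hdecomp y]
    simp only [map_add, map_smul, LinearMap.add_apply, LinearMap.smul_apply, h11, h12, h21, h22]
    simp
  have hlift (t : TensorProduct K (Fin 2 → K) (Fin 2 → K)) : TensorProduct.lift m t 0 = 0 := by
    induction t with
    | zero => simp
    | tmul x y => simpa using hm x y
    | add s t hs ht => simp [hs, ht]
  intro hsurj
  obtain ⟨t, ht⟩ := hsurj ![1, 0]
  simpa [ht] using hlift t
end
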